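/- For N odd, N = 2n+1, and c = (1 2 ... N), a permutation x ∈ A_N satisfies x ≤_3 c if and only if x is a noncrossing partition of [N] (i.e., x ≤_2 c) all of whose cycles, written as increasing sequences (u_1 < u_2 < ... < u_q), have odd length q and satisfy that u_{j+1} - u_j is odd for all j. -/

import Mathlib

open Equiv Equiv.Perm

/-- The word length of `x` with respect to a generating set `T`. -/
noncomputable def lenT {G : Type*} [Group G] (T : Set G) (x : G) : ℕ :=
  sInf {n | ∃ l : List G, (∀ t ∈ l, t ∈ T) ∧ l.prod = x ∧ l.length = n}

/-- The `T`-prefix order. -/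
def leT {G : Type*} [Group G] (T : Set G) (x y : G) : Prop :=
  lenT T y = lenT T x + lenT T (x⁻¹ * y)

/-- The set of 3-cycles of the symmetric group on `Fin N`. -/
def threeCycles (N : ℕ) : Set (Perm (Fin N)) := {σ | σ.IsThreeCycle}

/-- The set of transpositions of the symmetric group on `Fin N`. -/
def transpositions (N : ℕ) : Set (Perm (Fin N)) := {σ | σ.IsSwap}

/-- The number of odd cycles of a permutation, counting fixed points. -/
def ocyc {N : ℕ} (x : Perm (Fin N)) : ℕ :=
  (x.cycleType.filter (fun n => Odd n)).card + (N - x.cycleType.sum)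

open scoped Classical in
/-- The support of the cycle of `x` containing `a` (a singleton for a fixed point). -/
noncomputable def orbitF {N : ℕ} (x : Perm (Fin N)) (a : Fin N) : Finset (Fin N) :=
  Finset.univ.filter (fun b => x.SameCycle a b)

/-- Property (OD) for a cycle written as an increasing sequence `u₁ < u₂ < ⋯ < u_q`:
`q` is odd and all consecutive differences `u_{j+1} - u_j` are odd. -/
def ODfinset {N : ℕ} (S : Finset (Fin N)) : Prop :=
  Odd S.card ∧ (S.sort (· ≤ ·)).Chain' (fun a b => Odd ((b : ℕ) - (a : ℕ)))

/-- All cycles of `x`, written as increasing sequences, satisfy property (OD). -/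
def satisfiesOD {N : ℕ} (x : Perm (Fin N)) : Prop := ∀ a : Fin N, ODfinset (orbitF x a)

/-!
A permutation of `N` points with `k` cycles has transposition length `N - k`. A three-cycle is a
product of two transpositions, so transposition length is at most twice three-cycle length; equality
holds exactly when all cycles are odd, because a three-cycle that merges three cycles preserves
oddness and an odd cycle can be shortened by two points at a time. Hence, `c` being a single odd
cycle, `x ≤₃ c` means that `x ≤₂ c` and that `x` and its complement `y = x⁻¹ c` have odd cycles.

Assume `x ≤₂ c` and let the arc length of `x` at `u` be the clockwise distance from `u` to `x u`.
The arc of `y` from `i` to `y i` followed by that of `x` has length `N + 1`. Summing over `i` and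
comparing with the numbers of cycles shows that every cycle of `x` and of `y` goes around the circle
once, i.e. is increasing with arcs summing to `N`. As `N` is odd, (OD) for `x` then says that all
arc lengths of `x` are odd. These have the same parity as the arc lengths of `y`, so (OD) for `x`
makes the cycles of both `x` and `y` odd. Conversely, if the cycles of both are odd, then modulo `2`
the vector of arc lengths minus one sums to zero over each cycle of `x` and, after reindexing, of
`y`, hence is orthogonal to all functions invariant under `x` or under `y`. Counting dimensions,
these span all functions, so the vector vanishes.
-/

section WordLength

variable {G : Type*} [Group G] {T : Set G} {x y : G}

theorem lenT_prod_le {l : List G} (hl : ∀ t ∈ l, t ∈ T) : lenT T l.prod ≤ l.length :=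
  Nat.sInf_le ⟨l, hl, rfl, rfl⟩

theorem exists_list_length_eq_lenT (hx : x ∈ Submonoid.closure T) :
    ∃ l : List G, (∀ t ∈ l, t ∈ T) ∧ l.prod = x ∧ l.length = lenT T x := by
  obtain ⟨l, hl, hprod⟩ := Submonoid.exists_list_of_mem_closure hx
  exact Nat.sInf_mem (s := {n | ∃ l : List G, (∀ t ∈ l, t ∈ T) ∧ l.prod = x ∧ l.length = n})
    ⟨l.length, l, hl, hprod, rfl⟩

theorem lenT_mul_le (hx : x ∈ Submonoid.closure T) (hy : y ∈ Submonoid.closure T) :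
    lenT T (x * y) ≤ lenT T x + lenT T y := by
  obtain ⟨l, hl, rfl, hlx⟩ := exists_list_length_eq_lenT hx
  obtain ⟨k, hk, rfl, hky⟩ := exists_list_length_eq_lenT hy
  rw [← hlx, ← hky, ← List.prod_append, ← List.length_append]
  exact lenT_prod_le fun t ht => (List.mem_append.1 ht).elim (hl t) (hk t)

end WordLength

section Cycles

variable {α : Type*} {x : Perm α} {a b u v : α}

/-- The cycle of `x` through `a`, as a set; it is `{a}` if `a` is a fixed point. -/
def cycleSet (x : Perm α) (a : α) : Set α := {b | x.SameCycle a b}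

/-- The number of cycles of a permutation, fixed points included. -/
noncomputable def numCycles (x : Perm α) : ℕ := Nat.card (Quotient (SameCycle.setoid x))

/-- Every cycle of the permutation has odd length. -/
def HasOddCycles (x : Perm α) : Prop := ∀ a, Odd (cycleSet x a).ncard

theorem cycleSet_eq_of_sameCycle (h : x.SameCycle a b) : cycleSet x a = cycleSet x b :=
  Set.ext fun _ => ⟨h.symm.trans, h.trans⟩

theorem disjoint_cycleSet (h : ¬ x.SameCycle a b) : Disjoint (cycleSet x a) (cycleSet x b) :=
  Set.disjoint_left.2 fun _ ha hb => h (SameCycle.trans ha (SameCycle.symm hb))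

theorem cycleSet_eq_singleton (h : x a = a) : cycleSet x a = {a} :=
  Set.ext fun _ => ⟨fun hb => (SameCycle.eq_of_left hb h).symm,
    fun hb => hb ▸ SameCycle.refl x a⟩

theorem not_sameCycle_of_apply_eq (h : x b = b) (hab : a ≠ b) : ¬ x.SameCycle a b :=
  fun hs => hab (hs.eq_of_right h)

theorem hasOddCycles_one : HasOddCycles (1 : Perm α) := fun a => by
  simp [cycleSet_eq_singleton (one_apply a)]

theorem hasOddCycles_of_forall_sameCycle (hα : Odd (Nat.card α)) (h : ∀ u v, x.SameCycle u v) :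
    HasOddCycles x := fun a => by
  rwa [show cycleSet x a = Set.univ from Set.eq_univ_of_forall (h a), Set.ncard_univ]

theorem numCycles_eq_one_of_forall_sameCycle [Nonempty α] (h : ∀ u v, x.SameCycle u v) :
    numCycles x = 1 := by
  rw [numCycles, Nat.card_eq_one_iff_unique]
  exact ⟨⟨fun p q => Quotient.inductionOn₂ p q fun u v => Quotient.sound (h u v)⟩,
    ‹Nonempty α›.map (Quotient.mk _)⟩

theorem numCycles_one : numCycles (1 : Perm α) = Nat.card α :=
  (Nat.card_eq_of_bijective (Quotient.mk (SameCycle.setoid (1 : Perm α)))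
    ⟨fun _ _ h => sameCycle_one.1 (Quotient.exact h), Quotient.mk_surjective⟩).symm

variable [Finite α]

theorem numCycles_le_card (x : Perm α) : numCycles x ≤ Nat.card α :=
  Nat.card_le_card_of_surjective _ Quotient.mk_surjective

theorem mem_of_sameCycle_of_mapsTo {s : Set α} (hs : Set.MapsTo x s s) (h : x.SameCycle u v)
    (hu : u ∈ s) : v ∈ s := by
  obtain ⟨i, rfl⟩ := h.exists_nat_pow_eq
  exact iterate_eq_pow x i ▸ hs.iterate i hu

end Cycles

section InvariantFunctions

variable {α : Type*} {K : Type*} [Field K] {x y : Perm α} {f : α → K} {a b : α}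

variable (K) in
/-- The space of functions constant on the cycles of `x`. Its dimension is the number of cycles,
which turns cycle counting into linear algebra. -/
def invariantFunctions (x : Perm α) : Submodule K (α → K) where
  carrier := {f | ∀ a, f (x a) = f a}
  add_mem' hf hg a := congrArg₂ (· + ·) (hf a) (hg a)
  zero_mem' _ := rfl
  smul_mem' c _ hf a := congrArg (c • ·) (hf a)

theorem apply_eq_of_mem_invariantFunctions [Finite α] (hf : f ∈ invariantFunctions K x)
    (h : x.SameCycle a b) : f a = f b :=
  (mem_of_sameCycle_of_mapsTo (s := {v | f v = f a}) (fun v hv => (hf v).trans hv) h rfl).symm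

theorem range_funLeft_mk_setoid [Finite α] (x : Perm α) :
    LinearMap.range (LinearMap.funLeft K K (Quotient.mk (SameCycle.setoid x))) =
      invariantFunctions K x := by
  ext f
  refine ⟨?_, fun hf => ?_⟩
  · rintro ⟨g, rfl⟩ a
    exact congrArg g (Quotient.sound (sameCycle_apply_left.2 (SameCycle.refl x a)))
  · exact ⟨Quotient.lift f fun a b => apply_eq_of_mem_invariantFunctions hf, rfl⟩

theorem finrank_invariantFunctions [Finite α] (x : Perm α) :
    Module.finrank K (invariantFunctions K x) = numCycles x := by
  have := Fintype.ofFinite (Quotient (SameCycle.setoid x))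
  rw [← range_funLeft_mk_setoid, LinearMap.finrank_range_of_inj
    (LinearMap.funLeft_injective_of_surjective K K _ Quotient.mk_surjective),
    Module.finrank_fintype_fun_eq_card, numCycles, Nat.card_eq_fintype_card]

theorem finrank_inf_invariantFunctions [Finite α] [Nonempty α]
    (h : ∀ u v, (x * y).SameCycle u v) :
    Module.finrank K (invariantFunctions K x ⊓ invariantFunctions K y : Submodule K (α → K)) =
      1 := by
  have hinf : invariantFunctions K x ⊓ invariantFunctions K y = invariantFunctions K (x * y) := by
    refine le_antisymm (fun f hf a => (hf.1 (y a)).trans (hf.2 a)) fun f hf => ?_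
    have hconst : ∀ u v, f u = f v := fun u v => apply_eq_of_mem_invariantFunctions hf (h u v)
    exact ⟨fun a => hconst _ _, fun a => hconst _ _⟩
  rw [hinf, finrank_invariantFunctions, numCycles_eq_one_of_forall_sameCycle h]

theorem sup_invariantFunctions_eq_top [Finite α] [Nonempty α] (h : ∀ u v, (x * y).SameCycle u v)
    (hcard : numCycles x + numCycles y = Nat.card α + 1) :
    invariantFunctions K x ⊔ invariantFunctions K y = ⊤ := by
  have := Fintype.ofFinite α
  apply Submodule.eq_top_of_finrank_eq
  have hdim := Submodule.finrank_sup_add_finrank_inf_eq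
    (invariantFunctions K x) (invariantFunctions K y)
  rw [finrank_inf_invariantFunctions h, finrank_invariantFunctions, finrank_invariantFunctions,
    hcard, Nat.card_eq_fintype_card] at hdim
  rw [Module.finrank_fintype_fun_eq_card]
  exact Nat.add_right_cancel hdim

theorem eq_zero_of_forall_dotProduct_invariantFunctions_eq_zero [Fintype α]
    (h : ∀ u v, (x * y).SameCycle u v) (hcard : numCycles x + numCycles y = Nat.card α + 1)
    {e : α → K} (hx : ∀ f ∈ invariantFunctions K x, f ⬝ᵥ e = 0)
    (hy : ∀ f ∈ invariantFunctions K y, f ⬝ᵥ e = 0) : e = 0 := by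
  refine dotProduct_eq_zero e fun w => ?_
  rcases isEmpty_or_nonempty α with _ | _
  · simp
  obtain ⟨f, hf, g, hg, rfl⟩ : ∃ f ∈ invariantFunctions K x, ∃ g ∈ invariantFunctions K y,
      f + g = w := by
    rw [← Submodule.mem_sup, sup_invariantFunctions_eq_top h hcard]
    trivial
  rw [dotProduct_comm, add_dotProduct, hx f hf, hy g hg, add_zero]

end InvariantFunctions

section MulSwap

variable {α : Type*} [DecidableEq α] {x : Perm α} {a b u v : α}

theorem not_sameCycle_mul_swap_apply (ha : x a ≠ a) :
    ¬ (x * swap a (x a)).SameCycle a (x a) :=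
  not_sameCycle_of_apply_eq (by simp) ha.symm

variable [Finite α]

theorem sameCycle_mul_swap_of_sameCycle (hab : (x * swap a b).SameCycle a b)
    (h : x.SameCycle u v) : (x * swap a b).SameCycle u v := by
  refine mem_of_sameCycle_of_mapsTo (s := cycleSet (x * swap a b) u) (fun w hw => ?_) h
    (SameCycle.refl _ u)
  have hswap : (x * swap a b).SameCycle w (swap a b w) := by
    rcases eq_or_ne w a with rfl | hwa
    · rwa [swap_apply_left]
    rcases eq_or_ne w b with rfl | hwb
    · rw [swap_apply_right]
      exact hab.symm
    · rw [swap_apply_of_ne_of_ne hwa hwb]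
  have hstep : (x * swap a b).SameCycle w (x w) := by
    simpa using sameCycle_apply_right.2 hswap
  exact SameCycle.trans hw hstep

/-- Otherwise the cycle of `x * swap a b` through `a` would, after its first step `a ↦ x b`, follow
the cycle of `x` through `b` without ever closing up. -/
theorem sameCycle_mul_swap (h : ¬ x.SameCycle a b) : (x * swap a b).SameCycle a b := by
  by_contra hab
  refine h (mem_of_sameCycle_of_mapsTo (x := x * swap a b) (u := x b) (v := a)
    (s := cycleSet x b ∩ cycleSet (x * swap a b) a) (fun v ⟨hxv, hyv⟩ => ?_) ?_ ?_).1.symm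
  · have hva : v ≠ a := fun e => h (e ▸ SameCycle.symm hxv)
    have hvb : v ≠ b := fun e => hab (e ▸ hyv)
    have hstep : (x * swap a b) v = x v := by rw [mul_apply, swap_apply_of_ne_of_ne hva hvb]
    exact ⟨hstep ▸ sameCycle_apply_right.2 hxv, sameCycle_apply_right.2 hyv⟩
  · simpa using sameCycle_apply_left.2 (SameCycle.refl (x * swap a b) a)
  · refine ⟨sameCycle_apply_right.2 (SameCycle.refl x b), ?_⟩
    simpa [cycleSet] using sameCycle_apply_right.2 (SameCycle.refl (x * swap a b) a)

theorem cycleSet_mul_swap_left (h : ¬ x.SameCycle a b) :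
    cycleSet (x * swap a b) a = cycleSet x a ∪ cycleSet x b := by
  have hab := sameCycle_mul_swap h
  refine Set.Subset.antisymm (fun v hv => ?_) (Set.union_subset ?_ ?_)
  · refine mem_of_sameCycle_of_mapsTo (fun w hw => ?_) hv (Or.inl (SameCycle.refl x a))
    rcases eq_or_ne w a with rfl | hwa
    · exact Or.inr (by simp [cycleSet, SameCycle.refl])
    rcases eq_or_ne w b with rfl | hwb
    · exact Or.inl (by simp [cycleSet, SameCycle.refl])
    rw [mul_apply, swap_apply_of_ne_of_ne hwa hwb]
    exact hw.imp sameCycle_apply_right.2 sameCycle_apply_right.2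
  · exact fun v => sameCycle_mul_swap_of_sameCycle hab
  · exact fun v hv => hab.trans (sameCycle_mul_swap_of_sameCycle hab hv)

theorem cycleSet_mul_swap_of_not_sameCycle (h : ¬ x.SameCycle a b)
    (hu : ¬ (x * swap a b).SameCycle a u) : cycleSet (x * swap a b) u = cycleSet x u := by
  have hab := sameCycle_mul_swap h
  refine Set.Subset.antisymm (fun v hv => ?_) fun v => sameCycle_mul_swap_of_sameCycle hab
  refine mem_of_sameCycle_of_mapsTo (fun w hw => ?_) hv (SameCycle.refl x u)
  have hyw := sameCycle_mul_swap_of_sameCycle hab hw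
  have hwa : w ≠ a := fun e => hu (e ▸ hyw).symm
  have hwb : w ≠ b := fun e => hu (hab.trans (e ▸ hyw).symm)
  rw [mul_apply, swap_apply_of_ne_of_ne hwa hwb]
  exact sameCycle_apply_right.2 hw

theorem ncard_cycleSet_mul_swap_left (h : ¬ x.SameCycle a b) :
    (cycleSet (x * swap a b) a).ncard = (cycleSet x a).ncard + (cycleSet x b).ncard := by
  rw [cycleSet_mul_swap_left h, Set.ncard_union_eq (disjoint_cycleSet h)]

theorem invariantFunctions_mul_swap {K : Type*} [Field K] (h : ¬ x.SameCycle a b) :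
    invariantFunctions K (x * swap a b) =
      invariantFunctions K x ⊓
        LinearMap.ker (LinearMap.proj (φ := fun _ => K) (R := K) a - LinearMap.proj b) := by
  ext f
  have hswap (hab : f a = f b) (u) : f (swap a b u) = f u := by
    rw [swap_apply_def]
    split_ifs with hua hub
    · rw [hua, hab]
    · rw [hub, hab]
    · rfl
  simp only [Submodule.mem_inf, LinearMap.mem_ker, LinearMap.sub_apply, LinearMap.proj_apply,
    sub_eq_zero]
  refine ⟨fun hf => ?_, fun ⟨hf, hab⟩ u => (hf _).trans (hswap hab u)⟩
  have hab := apply_eq_of_mem_invariantFunctions hf (sameCycle_mul_swap h)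
  refine ⟨fun u => ?_, hab⟩
  have := hf (swap a b u)
  rwa [mul_apply, swap_apply_self, hswap hab] at this

theorem numCycles_mul_swap_of_not_sameCycle (h : ¬ x.SameCycle a b) :
    numCycles (x * swap a b) + 1 = numCycles x := by
  let φ : Module.Dual ℚ (invariantFunctions ℚ x) :=
    (LinearMap.proj (φ := fun _ => ℚ) (R := ℚ) a - LinearMap.proj b) ∘ₗ
      (invariantFunctions ℚ x).subtype
  have hφ : φ ≠ 0 := by
    classical
    let f : invariantFunctions ℚ x :=
      ⟨(cycleSet x a).indicator 1, fun u => by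
        by_cases hu : x.SameCycle a u <;> simp [Set.indicator, cycleSet, hu]⟩
    have hf : φ f = 1 := by
      simp [φ, f, Set.indicator, cycleSet, h, SameCycle.refl]
    intro h0
    simp [h0] at hf
  have hker : (LinearMap.ker φ).map (invariantFunctions ℚ x).subtype =
      invariantFunctions ℚ (x * swap a b) := by
    rw [invariantFunctions_mul_swap h, LinearMap.ker_comp, Submodule.map_comap_subtype]
  rw [← finrank_invariantFunctions (K := ℚ) x, ← Module.Dual.finrank_ker_add_one_of_ne_zero hφ,
    ← finrank_invariantFunctions (K := ℚ) (x * swap a b), ← hker,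
    Submodule.finrank_map_subtype_eq]

theorem numCycles_le_numCycles_mul_swap_of_sameCycle (h : x.SameCycle a b) :
    numCycles x ≤ numCycles (x * swap a b) := by
  have hx : x * swap a b * swap a b = x := mul_swap_mul_self a b x
  by_cases hy : (x * swap a b).SameCycle a b
  · refine Nat.card_le_card_of_surjective
      (Quotient.map id fun u v huv => ?_) (Quotient.map_surjective _ Function.surjective_id)
    have := sameCycle_mul_swap_of_sameCycle (x := x * swap a b) (hx.symm ▸ h) huv
    rwa [hx] at this
  · have := numCycles_mul_swap_of_not_sameCycle hy
    rw [hx] at this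
    omega

theorem numCycles_le_numCycles_mul_swap_add_one (x : Perm α) (a b : α) :
    numCycles x ≤ numCycles (x * swap a b) + 1 := by
  by_cases h : x.SameCycle a b
  · exact (numCycles_le_numCycles_mul_swap_of_sameCycle h).trans (Nat.le_succ _)
  · exact (numCycles_mul_swap_of_not_sameCycle h).ge

theorem numCycles_mul_swap_apply (ha : x a ≠ a) :
    numCycles (x * swap a (x a)) = numCycles x + 1 := by
  rw [← numCycles_mul_swap_of_not_sameCycle (not_sameCycle_mul_swap_apply ha), mul_swap_mul_self]

end MulSwap

section MulThreeCycle

variable {α : Type*} [Finite α] [DecidableEq α] {x : Perm α} {p q r : α}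

theorem not_sameCycle_of_numCycles_mul_add_two_le
    (h : numCycles (x * swap p q * swap p r) + 2 ≤ numCycles x) :
    ¬ x.SameCycle p q ∧ ¬ (x * swap p q).SameCycle p r := by
  refine ⟨fun hpq => ?_, fun hpr => ?_⟩
  · have := numCycles_le_numCycles_mul_swap_of_sameCycle hpq
    have := numCycles_le_numCycles_mul_swap_add_one (x * swap p q) p r
    omega
  · have := numCycles_le_numCycles_mul_swap_add_one x p q
    have := numCycles_le_numCycles_mul_swap_of_sameCycle hpr
    omega

theorem cycleSet_mul_swap_mul_swap_left (hpq : ¬ x.SameCycle p q)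
    (hpr : ¬ (x * swap p q).SameCycle p r) :
    cycleSet (x * swap p q * swap p r) p = cycleSet x p ∪ cycleSet x q ∪ cycleSet x r := by
  rw [cycleSet_mul_swap_left hpr, cycleSet_mul_swap_left hpq,
    cycleSet_mul_swap_of_not_sameCycle hpq hpr]

theorem ncard_cycleSet_mul_swap_mul_swap_left (hpq : ¬ x.SameCycle p q)
    (hpr : ¬ (x * swap p q).SameCycle p r) :
    (cycleSet (x * swap p q * swap p r) p).ncard =
      (cycleSet x p).ncard + (cycleSet x q).ncard + (cycleSet x r).ncard := by
  rw [ncard_cycleSet_mul_swap_left hpr, ncard_cycleSet_mul_swap_left hpq,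
    cycleSet_mul_swap_of_not_sameCycle hpq hpr]

theorem cycleSet_mul_swap_mul_swap_of_not_sameCycle {u : α} (hpq : ¬ x.SameCycle p q)
    (hpr : ¬ (x * swap p q).SameCycle p r) (hu : ¬ (x * swap p q * swap p r).SameCycle p u) :
    cycleSet (x * swap p q * swap p r) u = cycleSet x u := by
  have hu' : ¬ (x * swap p q).SameCycle p u := fun h =>
    hu (sameCycle_mul_swap_of_sameCycle (sameCycle_mul_swap hpr) h)
  rw [cycleSet_mul_swap_of_not_sameCycle hpr hu, cycleSet_mul_swap_of_not_sameCycle hpq hu']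

theorem hasOddCycles_mul_swap_mul_swap (hpq : ¬ x.SameCycle p q)
    (hpr : ¬ (x * swap p q).SameCycle p r) (hx : HasOddCycles x) :
    HasOddCycles (x * swap p q * swap p r) := by
  intro u
  by_cases hu : (x * swap p q * swap p r).SameCycle p u
  · rw [← cycleSet_eq_of_sameCycle hu, ncard_cycleSet_mul_swap_mul_swap_left hpq hpr]
    exact ((hx p).add_odd (hx q)).add_odd (hx r)
  · rw [cycleSet_mul_swap_mul_swap_of_not_sameCycle hpq hpr hu]
    exact hx u

theorem hasOddCycles_of_hasOddCycles_mul_swap_mul_swap (hpq : ¬ x.SameCycle p q)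
    (hpr : ¬ (x * swap p q).SameCycle p r) (hq : Odd (cycleSet x q).ncard)
    (hr : Odd (cycleSet x r).ncard) (h : HasOddCycles (x * swap p q * swap p r)) :
    HasOddCycles x := by
  have hp : Odd (cycleSet x p).ncard := by
    have := h p
    rw [ncard_cycleSet_mul_swap_mul_swap_left hpq hpr] at this
    grind
  intro u
  by_cases hu : u ∈ cycleSet (x * swap p q * swap p r) p
  · rw [cycleSet_mul_swap_mul_swap_left hpq hpr] at hu
    rcases hu with (hu | hu) | hu <;> rwa [← cycleSet_eq_of_sameCycle hu]
  · rw [← cycleSet_mul_swap_mul_swap_of_not_sameCycle hpq hpr hu]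
    exact h u

end MulThreeCycle

section Lengths

variable {α : Type*} {x : Perm α}

theorem apply_apply_ne_of_hasOddCycles [Finite α] (hx : HasOddCycles x) {a : α} (ha : x a ≠ a) :
    x (x a) ≠ a := by
  classical
  intro h
  have hcard := ncard_cycleSet_mul_swap_left (not_sameCycle_mul_swap_apply ha)
  rw [mul_swap_mul_self, cycleSet_eq_singleton (x := x * swap a (x a)) (a := a) (by simp [h]),
    cycleSet_eq_singleton (x := x * swap a (x a)) (a := x a) (by simp), Set.ncard_singleton,
    Set.ncard_singleton] at hcard
  exact absurd (hx a) (by simp [hcard])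

variable [DecidableEq α]

theorem exists_swap_mul_swap_of_isThreeCycle [Fintype α] {t : Perm α} (ht : t.IsThreeCycle) :
    ∃ p q r, t = swap p q * swap p r := by
  obtain ⟨a, ha⟩ : t.support.Nonempty := Finset.card_pos.1 (by simp [ht.card_support])
  refine ⟨t a, a, t (t a), ?_⟩
  rw [swap_comm (t a) a]
  exact ht.eq_swap_mul_swap_iff_mem_support.2 ha

theorem card_le_numCycles_prod_add_length [Finite α] {l : List (Perm α)}
    (hl : ∀ t ∈ l, t.IsSwap) : Nat.card α ≤ numCycles l.prod + l.length := by
  induction l using List.reverseRecOn with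
  | nil => simp [numCycles_one]
  | append_singleton l t ih =>
    have hprefix := ih fun s hs => hl s (List.mem_append_left _ hs)
    obtain ⟨a, b, -, rfl⟩ := hl t (by simp)
    have := numCycles_le_numCycles_mul_swap_add_one l.prod a b
    simp only [List.prod_append, List.prod_singleton, List.length_append, List.length_singleton]
    omega

theorem exists_swaps_length_add_numCycles_eq [Finite α] (x : Perm α) :
    ∃ l : List (Perm α), (∀ t ∈ l, t.IsSwap) ∧ l.prod = x ∧
      l.length + numCycles x = Nat.card α := by
  by_cases hx : x = 1
  · exact ⟨[], by simp, hx.symm, by simp [hx, numCycles_one]⟩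
  obtain ⟨a, ha⟩ : ∃ a, x a ≠ a := not_forall.1 fun h => hx (Equiv.ext h)
  have hcount := numCycles_mul_swap_apply ha
  have := numCycles_le_card (x * swap a (x a))
  obtain ⟨l, hl, hprod, hlen⟩ := exists_swaps_length_add_numCycles_eq (x * swap a (x a))
  refine ⟨l ++ [swap a (x a)], ?_, ?_, ?_⟩
  · simpa [or_imp, forall_and] using ⟨hl, swap_isSwap_iff.2 ha.symm⟩
  · rw [List.prod_append, List.prod_singleton, hprod, mul_swap_mul_self]
  · rw [List.length_append, List.length_singleton]
    omega
termination_by Nat.card α - numCycles x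

theorem lenT_isSwap_add_numCycles [Finite α] (x : Perm α) :
    lenT {σ : Perm α | σ.IsSwap} x + numCycles x = Nat.card α := by
  obtain ⟨l, hl, rfl, hlen⟩ := exists_list_length_eq_lenT (T := {σ : Perm α | σ.IsSwap}) (x := x)
    (mclosure_isSwap (α := α) ▸ Submonoid.mem_top x)
  obtain ⟨k, hk, hprod, hlen'⟩ := exists_swaps_length_add_numCycles_eq l.prod
  have hlower := card_le_numCycles_prod_add_length hl
  have hupper := lenT_prod_le (T := {σ : Perm α | σ.IsSwap}) hk
  rw [hprod] at hupper
  omega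

theorem leT_isSwap_iff [Finite α] {c : Perm α} :
    leT {σ : Perm α | σ.IsSwap} x c ↔
      numCycles x + numCycles (x⁻¹ * c) = Nat.card α + numCycles c := by
  have hx := lenT_isSwap_add_numCycles x
  have hy := lenT_isSwap_add_numCycles (x⁻¹ * c)
  have hc := lenT_isSwap_add_numCycles c
  rw [leT]
  omega

theorem card_le_numCycles_prod_add_two_mul_length [Fintype α] {l : List (Perm α)}
    (hl : ∀ t ∈ l, t.IsThreeCycle) : Nat.card α ≤ numCycles l.prod + 2 * l.length := by
  induction l using List.reverseRecOn with
  | nil => simp [numCycles_one]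
  | append_singleton l t ih =>
    have hprefix := ih fun s hs => hl s (List.mem_append_left _ hs)
    obtain ⟨p, q, r, rfl⟩ := exists_swap_mul_swap_of_isThreeCycle (hl t (by simp))
    have hpq := numCycles_le_numCycles_mul_swap_add_one l.prod p q
    have hpr := numCycles_le_numCycles_mul_swap_add_one (l.prod * swap p q) p r
    simp only [List.prod_append, List.prod_singleton, List.length_append, List.length_singleton,
      ← mul_assoc]
    omega

theorem hasOddCycles_prod_of_numCycles_add_le [Fintype α] {l : List (Perm α)}
    (hl : ∀ t ∈ l, t.IsThreeCycle) (hlen : numCycles l.prod + 2 * l.length ≤ Nat.card α) :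
    HasOddCycles l.prod := by
  induction l using List.reverseRecOn with
  | nil => exact hasOddCycles_one
  | append_singleton l t ih =>
    have hl' : ∀ s ∈ l, s.IsThreeCycle := fun s hs => hl s (List.mem_append_left _ hs)
    have hprefix := card_le_numCycles_prod_add_two_mul_length hl'
    obtain ⟨p, q, r, rfl⟩ := exists_swap_mul_swap_of_isThreeCycle (hl t (by simp))
    have hpq := numCycles_le_numCycles_mul_swap_add_one l.prod p q
    have hpr := numCycles_le_numCycles_mul_swap_add_one (l.prod * swap p q) p r
    simp only [List.prod_append, List.prod_singleton, List.length_append, List.length_singleton,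
      ← mul_assoc] at hlen ⊢
    obtain ⟨hpq', hpr'⟩ := not_sameCycle_of_numCycles_mul_add_two_le
      (x := l.prod) (p := p) (q := q) (r := r) (by omega)
    exact hasOddCycles_mul_swap_mul_swap hpq' hpr' (ih hl' (by omega))

variable [Fintype α]

/-- The three-cycle runs through the consecutive points `a`, `x a`, `x (x a)` of a cycle of `x`;
removing it turns `x a` and `x (x a)` into fixed points. -/
theorem exists_eq_mul_isThreeCycle_of_hasOddCycles (hx : HasOddCycles x) (hne : x ≠ 1) :
    ∃ z t : Perm α, x = z * t ∧ t.IsThreeCycle ∧ HasOddCycles z ∧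
      numCycles z = numCycles x + 2 := by
  obtain ⟨a, ha⟩ : ∃ a, x a ≠ a := not_forall.1 fun h => hne (Equiv.ext h)
  have haa : x (x a) ≠ a := apply_apply_ne_of_hasOddCycles hx ha
  have haa' : x (x a) ≠ x a := fun h => ha (x.injective h)
  set y := x * swap a (x a) with hy
  have hya : y a = x (x a) := by simp [hy]
  have hyxa : y (x a) = x a := by simp [hy]
  have hy_ne : y a ≠ a := hya ▸ haa
  set z := y * swap a (y a) with hz
  have hzy : z * swap a (y a) = y := mul_swap_mul_self a (y a) y
  have hyx : y * swap a (x a) = x := mul_swap_mul_self a (x a) x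
  have hzxa : z (x a) = x a := by
    rw [hz, mul_apply, swap_apply_of_ne_of_ne ha (hya ▸ haa'.symm), hyxa]
  have hzya : z (y a) = y a := by simp [hz]
  refine ⟨z, swap a (y a) * swap a (x a), by rw [← mul_assoc, hzy, hyx],
    isThreeCycle_swap_mul_swap_same hy_ne.symm ha.symm (hya ▸ haa'), ?_, ?_⟩
  · refine hasOddCycles_of_hasOddCycles_mul_swap_mul_swap (p := a) (q := y a) (r := x a)
      (not_sameCycle_mul_swap_apply hy_ne) ?_ ?_ ?_ ?_
    · rw [hzy]
      exact not_sameCycle_mul_swap_apply ha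
    · simp [cycleSet_eq_singleton hzya]
    · simp [cycleSet_eq_singleton hzxa]
    · rwa [hzy, hyx]
  · rw [numCycles_mul_swap_apply hy_ne, numCycles_mul_swap_apply ha]

theorem exists_threeCycles_two_mul_length_add_numCycles_eq {x : Perm α}
    (hx : HasOddCycles x) :
    ∃ l : List (Perm α), (∀ t ∈ l, t.IsThreeCycle) ∧ l.prod = x ∧
      2 * l.length + numCycles x = Nat.card α := by
  by_cases hne : x = 1
  · exact ⟨[], by simp, hne.symm, by simp [hne, numCycles_one]⟩
  obtain ⟨z, t, hzt, ht, hz, hcount⟩ := exists_eq_mul_isThreeCycle_of_hasOddCycles hx hne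
  have := numCycles_le_card z
  obtain ⟨l, hl, hprod, hlen⟩ := exists_threeCycles_two_mul_length_add_numCycles_eq hz
  refine ⟨l ++ [t], ?_, by simp [hprod, hzt], ?_⟩
  · simpa [or_imp, forall_and] using ⟨hl, ht⟩
  · rw [List.length_append, List.length_singleton]
    omega
termination_by Nat.card α - numCycles x
decreasing_by omega

theorem mem_alternatingGroup_iff_mem_closure_isThreeCycle :
    x ∈ alternatingGroup α ↔ x ∈ Submonoid.closure {σ : Perm α | σ.IsThreeCycle} := by
  rw [← closure_three_cycles_eq_alternating, ← Subgroup.mem_toSubmonoid,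
    Subgroup.closure_toSubmonoid_of_finite]

theorem mem_alternatingGroup_of_hasOddCycles (hx : HasOddCycles x) : x ∈ alternatingGroup α := by
  obtain ⟨l, hl, rfl, -⟩ := exists_threeCycles_two_mul_length_add_numCycles_eq hx
  exact list_prod_mem fun t ht => (hl t ht).mem_alternatingGroup

theorem lenT_isSwap_le_two_mul_lenT_isThreeCycle (hx : x ∈ alternatingGroup α) :
    lenT {σ : Perm α | σ.IsSwap} x ≤ 2 * lenT {σ : Perm α | σ.IsThreeCycle} x := by
  obtain ⟨l, hl, rfl, hlen⟩ :=
    exists_list_length_eq_lenT (mem_alternatingGroup_iff_mem_closure_isThreeCycle.1 hx)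
  have hswap := lenT_isSwap_add_numCycles l.prod
  have hlower := card_le_numCycles_prod_add_two_mul_length hl
  omega

theorem lenT_isSwap_eq_two_mul_lenT_isThreeCycle_iff (hx : x ∈ alternatingGroup α) :
    lenT {σ : Perm α | σ.IsSwap} x = 2 * lenT {σ : Perm α | σ.IsThreeCycle} x ↔
      HasOddCycles x := by
  have hswap := lenT_isSwap_add_numCycles x
  refine ⟨fun heq => ?_, fun hodd => ?_⟩
  · obtain ⟨l, hl, rfl, hlen⟩ :=
      exists_list_length_eq_lenT (mem_alternatingGroup_iff_mem_closure_isThreeCycle.1 hx)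
    exact hasOddCycles_prod_of_numCycles_add_le hl (by omega)
  · refine (lenT_isSwap_le_two_mul_lenT_isThreeCycle hx).antisymm ?_
    obtain ⟨l, hl, rfl, hlen⟩ := exists_threeCycles_two_mul_length_add_numCycles_eq hodd
    have hupper := lenT_prod_le (T := {σ : Perm α | σ.IsThreeCycle}) hl
    omega

theorem leT_isThreeCycle_iff {c : Perm α} (hc : HasOddCycles c) (hx : x ∈ alternatingGroup α) :
    leT {σ : Perm α | σ.IsThreeCycle} x c ↔
      leT {σ : Perm α | σ.IsSwap} x c ∧ HasOddCycles x ∧ HasOddCycles (x⁻¹ * c) := by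
  have hcA := mem_alternatingGroup_of_hasOddCycles hc
  have hyA : x⁻¹ * c ∈ alternatingGroup α := mul_mem (inv_mem hx) hcA
  have hx_le := lenT_isSwap_le_two_mul_lenT_isThreeCycle hx
  have hy_le := lenT_isSwap_le_two_mul_lenT_isThreeCycle hyA
  have hc_eq := (lenT_isSwap_eq_two_mul_lenT_isThreeCycle_iff hcA).2 hc
  have hc_le : lenT {σ : Perm α | σ.IsSwap} c ≤
      lenT {σ : Perm α | σ.IsSwap} x + lenT {σ : Perm α | σ.IsSwap} (x⁻¹ * c) := by
    have hmem (z : Perm α) : z ∈ Submonoid.closure {σ : Perm α | σ.IsSwap} :=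
      mclosure_isSwap (α := α) ▸ Submonoid.mem_top z
    simpa using lenT_mul_le (hmem x) (hmem (x⁻¹ * c))
  rw [← lenT_isSwap_eq_two_mul_lenT_isThreeCycle_iff hx,
    ← lenT_isSwap_eq_two_mul_lenT_isThreeCycle_iff hyA, leT, leT]
  omega

end Lengths

section OrbitF

variable {N : ℕ} {x : Perm (Fin N)} {a u : Fin N}

theorem mem_orbitF : u ∈ orbitF x a ↔ x.SameCycle a u := by
  simp [orbitF]

theorem apply_mem_orbitF : x u ∈ orbitF x a ↔ u ∈ orbitF x a := by
  simp [mem_orbitF]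

theorem ncard_cycleSet (x : Perm (Fin N)) (a : Fin N) :
    (cycleSet x a).ncard = (orbitF x a).card := by
  rw [← Set.ncard_coe_finset]
  exact congrArg Set.ncard (Set.ext fun _ => mem_orbitF.symm)

theorem dotProduct_eq_zero_of_sum_orbitF_eq_zero {K : Type*} [Field K] {e f : Fin N → K}
    (he : ∀ a, ∑ u ∈ orbitF x a, e u = 0)
    (hf : f ∈ invariantFunctions K x) : f ⬝ᵥ e = 0 := by
  classical
  refine Finset.sum_cancels_of_partition_cancels (SameCycle.setoid x) fun a _ => ?_
  have hclass : (Finset.univ.filter fun u => SameCycle.setoid x u a) = orbitF x a := by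
    ext u
    rw [Finset.mem_filter_univ, mem_orbitF]
    exact sameCycle_comm
  have hconst : ∀ u ∈ orbitF x a, f u * e u = f a * e u := fun u hu => by
    rw [apply_eq_of_mem_invariantFunctions hf (mem_orbitF.1 hu)]
  rw [hclass, Finset.sum_congr rfl hconst, ← Finset.mul_sum, he, mul_zero]

end OrbitF

section ArcLength

variable {N : ℕ} {x : Perm (Fin N)} {v s : Fin N}

/-- The length of the arc from `u` to `x u` when `Fin N` is arranged cyclically. At a fixed point it
is the full turn `N`, not `0`. -/
def arcLength (x : Perm (Fin N)) (u : Fin N) : ℤ := (x u : ℤ) - u + if x u ≤ u then (N : ℤ) else 0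

/-- The points that `x` does not move up; each of their arcs passes the boundary between the last
and the first point. -/
def antiExcedances (x : Perm (Fin N)) : Finset (Fin N) := {u | x u ≤ u}

/-- Every cycle of `x` is increasing when written from its least element: it goes around `Fin N`
just once, so that only its greatest element fails to move up. -/
def HasIncreasingCycles (x : Perm (Fin N)) : Prop :=
  ∀ u v, x.SameCycle u v → x u ≤ u → x v ≤ v → u = v

theorem exists_sameCycle_apply_le (x : Perm (Fin N)) (a : Fin N) :
    ∃ u, x.SameCycle a u ∧ x u ≤ u ∧ ∀ v, x.SameCycle a v → v ≤ u := by
  obtain ⟨u, hu, hmax⟩ := (orbitF x a).exists_max_image id ⟨a, mem_orbitF.2 (SameCycle.refl x a)⟩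
  exact ⟨u, mem_orbitF.1 hu, hmax _ (apply_mem_orbitF.2 hu), fun v hv => hmax v (mem_orbitF.2 hv)⟩

theorem surjective_mk_antiExcedances (x : Perm (Fin N)) :
    Function.Surjective fun u : antiExcedances x => Quotient.mk (SameCycle.setoid x) u := by
  refine fun q => Quotient.inductionOn q fun a => ?_
  obtain ⟨u, hau, hu, -⟩ := exists_sameCycle_apply_le x a
  exact ⟨⟨u, by simpa [antiExcedances] using hu⟩, Quotient.sound hau.symm⟩

theorem numCycles_le_card_antiExcedances (x : Perm (Fin N)) :
    numCycles x ≤ (antiExcedances x).card := by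
  simpa [numCycles] using Nat.card_le_card_of_surjective _ (surjective_mk_antiExcedances x)

theorem hasIncreasingCycles_of_card_antiExcedances_le
    (h : (antiExcedances x).card ≤ numCycles x) : HasIncreasingCycles x := by
  have hbij := (surjective_mk_antiExcedances x).bijective_of_nat_card_le
    (by simpa [numCycles] using h)
  intro u v huv hu hv
  exact congrArg Subtype.val (hbij.injective
    (a₁ := ⟨u, by simpa [antiExcedances] using hu⟩)
    (a₂ := ⟨v, by simpa [antiExcedances] using hv⟩) (Quotient.sound huv))

theorem sum_arcLength {S : Finset (Fin N)} (hS : ∀ v, x v ∈ S ↔ v ∈ S) :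
    ∑ u ∈ S, arcLength x u = N * (S.filter fun u => x u ≤ u).card := by
  have hperm : ∑ u ∈ S, (x u : ℤ) = ∑ u ∈ S, (u : ℤ) :=
    Finset.sum_equiv x (fun v => (hS v).symm) fun _ _ => rfl
  simp only [arcLength, Finset.sum_add_distrib, Finset.sum_sub_distrib, hperm, sub_self, zero_add,
    ← Finset.sum_filter, Finset.sum_const, nsmul_eq_mul, mul_comm]

theorem sum_univ_arcLength (x : Perm (Fin N)) :
    ∑ u, arcLength x u = N * (antiExcedances x).card :=
  sum_arcLength (by simp)

theorem sum_orbitF_arcLength (hx : HasIncreasingCycles x) (a : Fin N) :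
    ∑ u ∈ orbitF x a, arcLength x u = N := by
  obtain ⟨u, hau, hu, -⟩ := exists_sameCycle_apply_le x a
  have hfilter : ((orbitF x a).filter fun v => x v ≤ v) = {u} := by
    ext v
    simp only [Finset.mem_filter, mem_orbitF, Finset.mem_singleton]
    refine ⟨fun ⟨hav, hv⟩ => hx v u (hav.symm.trans hau) hv hu, ?_⟩
    rintro rfl
    exact ⟨hau, hu⟩
  rw [sum_arcLength fun _ => apply_mem_orbitF, hfilter, Finset.card_singleton, Nat.cast_one,
    mul_one]

/-- Were `v < s < x v`, the elements of the cycle up to `s` could only be reached from the greatest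
element and from the elements below `s` other than `v`: one too few. -/
theorem apply_le_of_lt_of_sameCycle (hx : HasIncreasingCycles x) (hvs : v < s)
    (hs : x.SameCycle v s) : x v ≤ s := by
  by_contra! hlt
  obtain ⟨M, hvM, hM, -⟩ := exists_sameCycle_apply_le x v
  set L := (orbitF x v).filter (· < s) with hL
  have hvL : v ∈ L := by simp [hL, mem_orbitF, hvs, SameCycle.refl]
  have hsL : s ∉ L := by simp [hL]
  have hmaps : ∀ w ∈ insert s L, x.symm w ∈ insert M (L.erase v) := by
    intro w hw
    obtain ⟨hws, hvw⟩ : w ≤ s ∧ x.SameCycle v (x.symm w) := by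
      rw [sameCycle_symm_apply_right]
      rcases Finset.mem_insert.1 hw with rfl | hw
      · exact ⟨le_rfl, hs⟩
      · exact ⟨(Finset.mem_filter.1 hw).2.le, mem_orbitF.1 (Finset.mem_filter.1 hw).1⟩
    rcases lt_or_ge (x.symm w) s with hlow | hhigh
    · have hne : x.symm w ≠ v := by
        rintro rfl
        exact absurd hws (by simpa using hlt)
      exact Finset.mem_insert_of_mem
        (Finset.mem_erase.2 ⟨hne, Finset.mem_filter.2 ⟨mem_orbitF.2 hvw, hlow⟩⟩)
    · have hMw : x.symm w = M :=
        hx _ _ (hvw.symm.trans hvM) (by simpa using hws.trans hhigh) hM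
      exact hMw ▸ Finset.mem_insert_self _ _
  have hcard := Finset.card_le_card_of_injOn _ hmaps x.symm.injective.injOn
  have hinsert := Finset.card_insert_le M (L.erase v)
  rw [Finset.card_insert_of_notMem hsL] at hcard
  rw [Finset.card_erase_add_one hvL] at hinsert
  omega

end ArcLength

section SatisfiesOD

theorem isChain_sort_iff {α : Type*} [LinearOrder α] {R : α → α → Prop} (S : Finset α) :
    (S.sort (· ≤ ·)).IsChain R ↔
      ∀ a ∈ S, ∀ b ∈ S, a < b → (∀ c ∈ S, a < c → b ≤ c) → R a b := by
  set l := S.sort (· ≤ ·) with hl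
  have hmono : ∀ i (hi : i < l.length) j (hj : j < l.length), l[i] < l[j] ↔ i < j :=
    fun i hi j hj => S.sortedLT_sort.strictMono_get.lt_iff_lt (a := ⟨i, hi⟩) (b := ⟨j, hj⟩)
  have hmem : ∀ a, a ∈ S ↔ ∃ i, ∃ hi : i < l.length, l[i] = a := fun a => by
    rw [← List.mem_iff_getElem, hl, Finset.mem_sort]
  rw [List.isChain_iff_getElem]
  refine ⟨fun h a ha b hb hab hnext => ?_, fun h i hi => ?_⟩
  · obtain ⟨i, hi, rfl⟩ := (hmem a).1 ha
    obtain ⟨j, hj, rfl⟩ := (hmem b).1 hb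
    have hij := (hmono i hi j hj).1 hab
    have hle := hnext l[i + 1] ((hmem _).2 ⟨i + 1, by omega, rfl⟩)
      ((hmono _ _ _ _).2 i.lt_succ_self)
    rw [← not_lt, hmono] at hle
    obtain rfl : j = i + 1 := by omega
    exact h i hj
  · refine h _ ((hmem _).2 ⟨i, _, rfl⟩) _ ((hmem _).2 ⟨i + 1, hi, rfl⟩)
      ((hmono _ _ _ _).2 i.lt_succ_self) fun c hc hic => ?_
    obtain ⟨k, hk, rfl⟩ := (hmem c).1 hc
    rw [hmono] at hic
    rw [← not_lt, hmono]
    omega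

variable {N : ℕ} {x : Perm (Fin N)}

theorem odd_sub_iff_odd_arcLength {u : Fin N} (hu : u < x u) :
    Odd ((x u : ℕ) - (u : ℕ)) ↔ Odd (arcLength x u) := by
  rw [arcLength, if_neg hu.not_ge, add_zero, ← Nat.cast_sub hu.le, Int.odd_coe_nat]

theorem ODfinset_iff (S : Finset (Fin N)) :
    ODfinset S ↔ Odd S.card ∧
      ∀ a ∈ S, ∀ b ∈ S, a < b → (∀ c ∈ S, a < c → b ≤ c) → Odd ((b : ℕ) - (a : ℕ)) := by
  -- `ODfinset` coerces the sorted list to `List ℕ` through the list monad.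
  have hcoe : (S.sort (· ≤ ·) >>= fun u => pure (u : ℕ)) =
      (S.sort (· ≤ ·)).map (fun u : Fin N => (u : ℕ)) := by
    rw [List.bind_eq_flatMap]
    exact List.flatMap_pure_eq_map _ _
  rw [ODfinset, hcoe, ← isChain_sort_iff (R := fun a b : Fin N => Odd ((b : ℕ) - (a : ℕ)))]
  exact and_congr_right' (List.isChain_map _)

theorem ODfinset_orbitF_iff (hx : HasIncreasingCycles x) (a : Fin N) :
    ODfinset (orbitF x a) ↔ Odd (orbitF x a).card ∧
      ∀ u, x.SameCycle a u → u < x u → Odd (arcLength x u) := by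
  rw [ODfinset_iff]
  refine and_congr_right' ⟨fun h u hu hlt => ?_, fun h u hu v hv huv hnext => ?_⟩
  · rw [← odd_sub_iff_odd_arcLength hlt]
    exact h u (mem_orbitF.2 hu) (x u) (apply_mem_orbitF.2 (mem_orbitF.2 hu)) hlt
      fun s hs hus => apply_le_of_lt_of_sameCycle hx hus (hu.symm.trans (mem_orbitF.1 hs))
  · obtain ⟨M, haM, hM, hmax⟩ := exists_sameCycle_apply_le x a
    have hsame := (mem_orbitF.1 hu).symm.trans (mem_orbitF.1 hv)
    have hlt : u < x u := by
      by_contra! hle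
      obtain rfl := hx u M ((mem_orbitF.1 hu).symm.trans haM) hle hM
      exact huv.not_ge (hmax v (mem_orbitF.1 hv))
    obtain rfl : v = x u := (hnext (x u) (apply_mem_orbitF.2 hu) hlt).antisymm
      (apply_le_of_lt_of_sameCycle hx huv hsame)
    exact (odd_sub_iff_odd_arcLength hlt).2 (h u (mem_orbitF.1 hu) hlt)

theorem satisfiesOD_iff (hx : HasIncreasingCycles x) :
    satisfiesOD x ↔ HasOddCycles x ∧ ∀ u, u < x u → Odd (arcLength x u) := by
  simp only [satisfiesOD, ODfinset_orbitF_iff hx, HasOddCycles, ncard_cycleSet, forall_and]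
  exact and_congr_right' ⟨fun h u => h u u (SameCycle.refl x u), fun h _ u _ => h u⟩

theorem odd_iff_cast_sub_one_eq_zero {k : ℤ} : Odd k ↔ (k : ZMod 2) - 1 = 0 := by
  rw [sub_eq_zero, ZMod.intCast_eq_one_iff_odd]

theorem hasOddCycles_iff_sum_orbitF_eq_zero (hN : Odd N) (hx : HasIncreasingCycles x) :
    HasOddCycles x ↔ ∀ a, ∑ u ∈ orbitF x a, ((arcLength x u : ZMod 2) - 1) = 0 := by
  refine forall_congr' fun a => ?_
  rw [Finset.sum_sub_distrib, ← Int.cast_sum, sum_orbitF_arcLength hx, ncard_cycleSet,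
    Finset.sum_const, nsmul_one, Int.cast_natCast, ZMod.natCast_eq_one_iff_odd.2 hN, sub_eq_zero,
    eq_comm, ZMod.natCast_eq_one_iff_odd]

theorem satisfiesOD_iff_forall_odd_arcLength (hN : Odd N) (hx : HasIncreasingCycles x) :
    satisfiesOD x ↔ ∀ u, Odd (arcLength x u) := by
  rw [satisfiesOD_iff hx, hasOddCycles_iff_sum_orbitF_eq_zero hN hx]
  simp only [odd_iff_cast_sub_one_eq_zero]
  refine ⟨fun ⟨hsum, hup⟩ u => ?_, fun h => ⟨fun a => Finset.sum_eq_zero fun u _ => h u,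
    fun u _ => h u⟩⟩
  rcases lt_or_ge u (x u) with hlt | hle
  · exact hup u hlt
  rw [← hsum u, Finset.sum_eq_single_of_mem u (mem_orbitF.2 (SameCycle.refl x u))]
  intro v hv hvu
  exact hup v (not_le.1 fun hv' => hvu (hx u v (mem_orbitF.1 hv) hle hv').symm)

end SatisfiesOD

section FinRotate

variable {m : ℕ} {x y : Perm (Fin (m + 1))}

theorem sameCycle_finRotate (u v : Fin (m + 1)) : (finRotate (m + 1)).SameCycle u v := by
  cases m with
  | zero => exact Fin.eq_zero u ▸ Fin.eq_zero v ▸ SameCycle.refl _ _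
  | succ k =>
    have hmoved (w : Fin (k + 2)) : finRotate (k + 2) w ≠ w :=
      mem_support.1 (support_finRotate ▸ Finset.mem_univ w)
    exact isCycle_finRotate.sameCycle (hmoved u) (hmoved v)

theorem arcLength_apply_add_arcLength (h : x * y = finRotate (m + 1)) (i : Fin (m + 1)) :
    arcLength x (y i) + arcLength y i = m + 2 := by
  have hxy : x (y i) = finRotate (m + 1) i := by rw [← h, mul_apply]
  have hyi := (y i).is_le
  simp only [arcLength, hxy, Fin.le_def, coe_finRotate]
  split_ifs with hi <;> simp_all <;> omega

theorem card_antiExcedances_add_card_antiExcedances (h : x * y = finRotate (m + 1)) :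
    (antiExcedances x).card + (antiExcedances y).card = m + 2 := by
  have hsum : ∑ i, (arcLength x (y i) + arcLength y i) = (m + 1) * (m + 2) := by
    simp [arcLength_apply_add_arcLength h]
  rw [Finset.sum_add_distrib, Equiv.sum_comp y (arcLength x), sum_univ_arcLength,
    sum_univ_arcLength, ← mul_add] at hsum
  push_cast at hsum
  exact_mod_cast mul_left_cancel₀ (by positivity) hsum

theorem hasIncreasingCycles_of_mul_eq_finRotate (h : x * y = finRotate (m + 1))
    (hcard : numCycles x + numCycles y = m + 2) :
    HasIncreasingCycles x ∧ HasIncreasingCycles y := by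
  have hanti := card_antiExcedances_add_card_antiExcedances h
  have hx := numCycles_le_card_antiExcedances x
  have hy := numCycles_le_card_antiExcedances y
  exact ⟨hasIncreasingCycles_of_card_antiExcedances_le (by omega),
    hasIncreasingCycles_of_card_antiExcedances_le (by omega)⟩

theorem cast_arcLength_apply (hm : Odd (m + 1)) (h : x * y = finRotate (m + 1))
    (i : Fin (m + 1)) : (arcLength x (y i) : ZMod 2) = arcLength y i := by
  have hsum := arcLength_apply_add_arcLength h i
  have heven : Even (arcLength x (y i) - arcLength y i) := by grind
  rw [← sub_eq_zero, ← Int.cast_sub, ZMod.intCast_eq_zero_iff_even.2 heven]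

theorem odd_arcLength_of_hasOddCycles (hm : Odd (m + 1)) (h : x * y = finRotate (m + 1))
    (hcard : numCycles x + numCycles y = m + 2) (hx : HasOddCycles x) (hy : HasOddCycles y)
    (u : Fin (m + 1)) : Odd (arcLength x u) := by
  obtain ⟨hx_inc, hy_inc⟩ := hasIncreasingCycles_of_mul_eq_finRotate h hcard
  rw [hasOddCycles_iff_sum_orbitF_eq_zero hm hx_inc] at hx
  rw [hasOddCycles_iff_sum_orbitF_eq_zero hm hy_inc] at hy
  rw [odd_iff_cast_sub_one_eq_zero]
  refine congrFun (eq_zero_of_forall_dotProduct_invariantFunctions_eq_zero (x := x) (y := y)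
    (K := ZMod 2) (e := fun u => (arcLength x u : ZMod 2) - 1) ?_ ?_
    (fun f => dotProduct_eq_zero_of_sum_orbitF_eq_zero hx) fun f hf => ?_) u
  · exact h ▸ sameCycle_finRotate
  · simpa using hcard
  rw [dotProduct, ← Equiv.sum_comp y]
  simp only [cast_arcLength_apply hm h, hf _]
  exact dotProduct_eq_zero_of_sum_orbitF_eq_zero hy hf

theorem hasOddCycles_and_hasOddCycles_iff_satisfiesOD (hm : Odd (m + 1))
    (h : x * y = finRotate (m + 1)) (hcard : numCycles x + numCycles y = m + 2) :
    HasOddCycles x ∧ HasOddCycles y ↔ satisfiesOD x := by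
  obtain ⟨hx_inc, hy_inc⟩ := hasIncreasingCycles_of_mul_eq_finRotate h hcard
  have hy_of_x (hx : satisfiesOD x) : satisfiesOD y := by
    rw [satisfiesOD_iff_forall_odd_arcLength hm hx_inc] at hx
    rw [satisfiesOD_iff_forall_odd_arcLength hm hy_inc]
    intro i
    rw [← ZMod.intCast_eq_one_iff_odd, ← cast_arcLength_apply hm h, ZMod.intCast_eq_one_iff_odd]
    exact hx (y i)
  refine ⟨fun ⟨hx, hy⟩ => ?_, fun hx => ⟨((satisfiesOD_iff hx_inc).1 hx).1,
    ((satisfiesOD_iff hy_inc).1 (hy_of_x hx)).1⟩⟩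
  exact (satisfiesOD_iff_forall_odd_arcLength hm hx_inc).2
    (odd_arcLength_of_hasOddCycles hm h hcard hx hy)

end FinRotate

theorem stmt8 (n : ℕ) (x : Perm (Fin (2*n+1)))
    (hx : x ∈ alternatingGroup (Fin (2*n+1))) :
    leT (threeCycles (2*n+1)) x (finRotate (2*n+1)) ↔
      (leT (transpositions (2*n+1)) x (finRotate (2*n+1)) ∧ satisfiesOD x) := by
  have hodd : Odd (2 * n + 1) := ⟨n, rfl⟩
  have hc : HasOddCycles (finRotate (2 * n + 1)) :=
    hasOddCycles_of_forall_sameCycle (by simp) sameCycle_finRotate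
  refine (leT_isThreeCycle_iff hc hx).trans (and_congr_right fun hle => ?_)
  have hcard : numCycles x + numCycles (x⁻¹ * finRotate (2 * n + 1)) = 2 * n + 2 := by
    simpa [numCycles_eq_one_of_forall_sameCycle sameCycle_finRotate] using leT_isSwap_iff.1 hle
  exact hasOddCycles_and_hasOddCycles_iff_satisfiesOD hodd (mul_inv_cancel_left x _) hcard
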